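/- Let σ be a real polynomial of degree k, let X^(1),…,X^(N) ∈ ℝ^d be i.i.d. random vectors whose coordinates are jointly continuous, and let Y_i = f_{N1}(W*, X^(i)) be labels from an L-layer teacher network N1 of width m* with activation σ. Let N2 be any student network with the same polynomial activation σ, depth L and width m̂ ≥ m*, with weights Ŵ interpolating the data: f_{N2}(Ŵ, X^(i)) = Y_i for all i ∈ [N]. Then, provided N ≥ Σ_{t=0}^{k^L} binom(d+t−1, t), with probability one over X^(1),…,X^(N), f_{N1}(W*, x) = f_{N2}(Ŵ, x) for every x ∈ ℝ^d. -/

import Mathlib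

open MeasureTheory Polynomial Matrix
open scoped Classical

noncomputable section

/-- One layer of a neural network: apply the weight matrix, then the activation
coordinatewise. -/
def applyLayer (σ : ℝ → ℝ) {m n : ℕ} (W : Matrix (Fin m) (Fin n) ℝ) (v : Fin n → ℝ) :
    Fin m → ℝ :=
  fun j => σ (∑ i, W j i * v i)

/-- Iterated application of `n` square hidden layers. -/
def iterLayers (σ : ℝ → ℝ) {m : ℕ} :
    (n : ℕ) → (Fin n → Matrix (Fin m) (Fin m) ℝ) → (Fin m → ℝ) → (Fin m → ℝ)
  | 0, _, v => v
  | n + 1, W, v => applyLayer σ (W (Fin.last n)) (iterLayers σ n (fun i => W i.castSucc) v)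

/-- Output of a neural network of depth `n+1` (one rectangular layer `W1` followed by
`n` square layers `Ws` and output weights `a`):
`f(W,x) = aᵀ σ(W_{n+1} σ( ⋯ σ(W_1 x) ⋯ ))`. -/
def nnFun (σ : ℝ → ℝ) {d m n : ℕ} (a : Fin m → ℝ)
    (W1 : Matrix (Fin m) (Fin d) ℝ) (Ws : Fin n → Matrix (Fin m) (Fin m) ℝ)
    (x : Fin d → ℝ) : ℝ :=
  ∑ j, a j * iterLayers σ n Ws (applyLayer σ W1 x) j

/-- The monomial `x_α = ∏ i, (x i) ^ (α i)`. -/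
def monom {d : ℕ} (α : Fin d → ℕ) (x : Fin d → ℝ) : ℝ := ∏ i, x i ^ α i

/-- Topological support of a measure on `ℝ`. -/
def measSupport (P : Measure ℝ) : Set ℝ := {x | ∀ U ∈ nhds x, P U ≠ 0}

/-- `ω(P,t) = min(|Support(P)| − 1, t)`, equal to `t` when the support is infinite. -/
def omegaP (P : Measure ℝ) (t : ℕ) : ℕ :=
  if (measSupport P).Finite then min ((measSupport P).ncard - 1) t else t

/-- `M' = min(M, d·(|Support(P)| − 1))`, equal to `M` when the support is infinite. -/
def capM (P : Measure ℝ) (d M : ℕ) : ℕ :=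
  if (measSupport P).Finite then min M (d * ((measSupport P).ncard - 1)) else M

/-- `F_{s,t}`: multi-indices `α ∈ ℕ^d` with all entries `≤ s` and total degree `t`. -/
def Fst (d s t : ℕ) : Finset (Fin d → ℕ) :=
  (Fintype.piFinset fun _ : Fin d => Finset.range (s + 1)).filter fun α => ∑ i, α i = t

/-- The `(d,M)`-multiplicities set `C = ∪_{t=0}^{M'} F_{ω(P,M),t}`. -/
def multSet (P : Measure ℝ) (d M : ℕ) : Finset (Fin d → ℕ) :=
  (Fintype.piFinset fun _ : Fin d => Finset.range (omegaP P M + 1)).filter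
    fun α => ∑ i, α i ≤ capM P d M

/-- `n`-th moment `c_n = E[X^n]` of `P`. -/
def momentP (P : Measure ℝ) (n : ℕ) : ℝ := ∫ x, x ^ n ∂P

/-- Hankel determinant `D_n = det((c_{i+j})_{0 ≤ i,j ≤ n})` of moments of `P`. -/
def Dn (P : Measure ℝ) (n : ℕ) : ℝ :=
  Matrix.det (Matrix.of fun i j : Fin (n + 1) => momentP P ((i : ℕ) + (j : ℕ)))

/-- `c(P,k) = min(min_{1 ≤ i ≤ ω(P,k)} (D_i/D_{i−1})^{k/2}, 1)`. -/
def cPk (P : Measure ℝ) (k : ℕ) : ℝ :=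
  sInf (insert (1 : ℝ)
    ((fun i => (Dn P i / Dn P (i - 1)) ^ ((k : ℝ) / 2)) '' Set.Icc 1 (omegaP P k)))

/-- `max(max_{1 ≤ i ≤ ω(P,k)} (D_i/D_{i−1})^{k/2}, 1)`. -/
def cPkMax (P : Measure ℝ) (k : ℕ) : ℝ :=
  sSup (insert (1 : ℝ)
    ((fun i => (Dn P i / Dn P (i - 1)) ^ ((k : ℝ) / 2)) '' Set.Icc 1 (omegaP P k)))

/-- `max(max_{1 ≤ i ≤ ω(P,k)} (D_i/D_{i−1})^k, 1)`. -/
def ratioMaxK (P : Measure ℝ) (k : ℕ) : ℝ :=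
  sSup (insert (1 : ℝ)
    ((fun i => (Dn P i / Dn P (i - 1)) ^ k) '' Set.Icc 1 (omegaP P k)))

/-- `min(min_{1 ≤ i ≤ ω(P,k)} (D_i/D_{i−1})^k, 1)`. -/
def ratioMinK (P : Measure ℝ) (k : ℕ) : ℝ :=
  sInf (insert (1 : ℝ)
    ((fun i => (Dn P i / Dn P (i - 1)) ^ k) '' Set.Icc 1 (omegaP P k)))

/-- `f(P,k) = max(c_{2ω(P,k)}^k, 1) · max(max_i (D_i/D_{i−1})^k, 1) / min(min_i (D_i/D_{i−1})^k, 1)`. -/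
def fPk (P : Measure ℝ) (k : ℕ) : ℝ :=
  max (momentP P (2 * omegaP P k) ^ k) 1 * ratioMaxK P k / ratioMinK P k

/-- `C(P,k) = f(P,k)/c(P,k)`. -/
def CPk (P : Measure ℝ) (k : ℕ) : ℝ := fPk P k / cPk P k

/-- An admissible distribution: a non-constant probability measure supported in `[-1,1]`. -/
def AdmissibleDist (P : Measure ℝ) : Prop :=
  IsProbabilityMeasure P ∧ P (Set.Icc (-1 : ℝ) 1) = 1 ∧ ∀ c : ℝ, P {c} < 1

/-- The product measure `P^{⊗d}` on `ℝ^d`. -/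
def piP (P : Measure ℝ) (d : ℕ) : Measure (Fin d → ℝ) := Measure.pi fun _ => P

/-- The joint law of `N` i.i.d. samples from `P^{⊗d}`. -/
def samples (P : Measure ℝ) (d N : ℕ) : Measure (Fin N → Fin d → ℝ) :=
  Measure.pi fun _ => piP P d

/-- Order of polynomial approximation of `σ` on `[-1,1]`: the least degree `r` for which
some real polynomial of degree `r` is uniformly within `ε` of `σ` on `[-1,1]`. -/
def approxOrder (σ : ℝ → ℝ) (ε : ℝ) : ℕ :=
  sInf {r : ℕ | ∃ p : Polynomial ℝ, p.natDegree = r ∧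
    ∀ x ∈ Set.Icc (-1 : ℝ) 1, |p.eval x - σ x| ≤ ε}

/-- An admissible activation function. -/
def AdmissibleActivation (σ : ℝ → ℝ) : Prop :=
  (∀ ε : ℝ, 0 < ε → ∃ p : Polynomial ℝ,
      ∀ x ∈ Set.Icc (-1 : ℝ) 1, |p.eval x - σ x| ≤ ε) ∧
  (∀ ε : ℝ, 0 < ε → ∃ p : Polynomial ℝ, p.natDegree = approxOrder σ ε ∧
      (∀ x ∈ Set.Icc (-1 : ℝ) 1, |p.eval x - σ x| ≤ ε) ∧
      ∀ x ∈ Set.Icc (-1 : ℝ) 1, p.eval x ∈ Set.Icc (0 : ℝ) 1) ∧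
  LipschitzOnWith 1 σ (Set.Icc (-1) 1) ∧
  ∀ x ∈ Set.Icc (-1 : ℝ) 1, |σ x| ≤ 1

/-- Quadratic form `vᵀ A v`. -/
def quadForm {n : Type*} [Fintype n] (A : Matrix n n ℝ) (v : n → ℝ) : ℝ :=
  ∑ i, ∑ j, v i * A i j * v j

/-- Smallest eigenvalue of a symmetric matrix (Rayleigh characterization). -/
def lamMin {n : Type*} [Fintype n] (A : Matrix n n ℝ) : ℝ :=
  sInf {r : ℝ | ∃ v : n → ℝ, ∑ i, v i ^ 2 = 1 ∧ r = quadForm A v}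

/-- Largest eigenvalue of a symmetric matrix (Rayleigh characterization). -/
def lamMax {n : Type*} [Fintype n] (A : Matrix n n ℝ) : ℝ :=
  sSup {r : ℝ | ∃ v : n → ℝ, ∑ i, v i ^ 2 = 1 ∧ r = quadForm A v}

/-- Smallest singular value. -/
def sigMin {n : Type*} [Fintype n] (A : Matrix n n ℝ) : ℝ :=
  Real.sqrt (lamMin (Aᵀ * A))

/-- Largest singular value. -/
def sigMax {n : Type*} [Fintype n] (A : Matrix n n ℝ) : ℝ :=
  Real.sqrt (lamMax (Aᵀ * A))

/-- The covariance matrix `Σ = E[𝒳 𝒳ᵀ]` of the monomials indexed by the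
`(d,k)`-multiplicities set, for input `X ∼ P^{⊗d}`. -/
def covMat (P : Measure ℝ) (d k : ℕ) :
    Matrix {α // α ∈ multSet P d k} {α // α ∈ multSet P d k} ℝ :=
  Matrix.of fun a b => ∫ x, monom a.1 x * monom b.1 x ∂(piP P d)


lemma aux_ae_cons {α : Type} [MeasurableSpace α] (ν : Measure α) [SigmaFinite ν] (n : ℕ)
    (P : (Fin (n+1) → α) → Prop) (hP : MeasurableSet {X | P X})
    (h : ∀ᵐ s ∂(Measure.pi fun _ : Fin n => ν), ∀ᵐ y ∂ν, P (Fin.cons y s)) :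
    ∀ᵐ X ∂(Measure.pi fun _ : Fin (n+1) => ν), P X := by
  have mp := measurePreserving_piFinSuccAbove (fun _ : Fin (n+1) => ν) 0
  have mps := mp.symm
  have hm : MeasurableSet {z : α × (Fin n → α) | P (Fin.cons z.1 z.2)} := by
    have := mps.measurable hP
    simpa [MeasurableEquiv.piFinSuccAbove, Fin.insertNthEquiv] using! this
  have h2 : ∀ᵐ z ∂(ν.prod (Measure.pi fun _ : Fin n => ν)), P (Fin.cons z.1 z.2) := by
    rw [Measure.ae_prod_iff_ae_ae hm]
    rw [Measure.ae_ae_comm]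
    · exact h
    · exact hm
  have h3 := mp.quasiMeasurePreserving.ae h2
  filter_upwards [h3] with X hX
  have : (Fin.cons (X 0) (fun i : Fin n => X i.succ) : Fin (n+1) → α) = X := Fin.cons_self_tail X
  rw [← this]
  exact hX

lemma aux_mvpoly_ae (n : ℕ) (p : MvPolynomial (Fin n) ℝ) (hp : p ≠ 0) :
    ∀ᵐ x ∂(Measure.pi fun _ : Fin n => (volume : Measure ℝ)), MvPolynomial.eval x p ≠ 0 := by
  induction n with
  | zero =>
    refine Filter.Eventually.of_forall fun x hx => hp ?_
    apply MvPolynomial.funext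
    intro y
    rw [Subsingleton.elim y x, hx, map_zero]
  | succ n ih =>
    apply aux_ae_cons
    · exact (isOpen_ne_fun (MvPolynomial.continuous_eval p) continuous_const).measurableSet
    · have hq : MvPolynomial.finSuccEquiv ℝ n p ≠ 0 := by simpa using hp
      filter_upwards [ih _ (Polynomial.leadingCoeff_ne_zero.2 hq)] with s hs
      have hr : Polynomial.map (MvPolynomial.eval s) (MvPolynomial.finSuccEquiv ℝ n p) ≠ 0 := by
        intro h0
        apply hs
        have := congrArg (fun q => q.coeff (MvPolynomial.finSuccEquiv ℝ n p).natDegree) h0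
        simpa [Polynomial.coeff_map] using this
      have : ∀ᵐ y : ℝ, y ∉ {y | (Polynomial.map (MvPolynomial.eval s) (MvPolynomial.finSuccEquiv ℝ n p)).IsRoot y} :=
        measure_eq_zero_iff_ae_notMem.1 ((Polynomial.finite_setOfPred_isRoot hr).measure_zero volume)
      filter_upwards [this] with y hy
      rw [MvPolynomial.eval_eq_eval_mv_eval']
      exact hy

lemma aux_det {d : ℕ} (ν : Measure (Fin d → ℝ)) [IsProbabilityMeasure ν]
    (hac : ν ≪ (volume : Measure (Fin d → ℝ))) (n : ℕ) (b : Fin n → MvPolynomial (Fin d) ℝ)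
    (hb : LinearIndependent ℝ b) :
    ∀ᵐ X ∂(Measure.pi fun _ : Fin n => ν),
      Matrix.det (Matrix.of fun i j : Fin n => MvPolynomial.eval (X i) (b j)) ≠ 0 := by
  induction n with
  | zero => simp
  | succ n ih =>
    apply aux_ae_cons
    · refine (isOpen_ne_fun ?_ continuous_const).measurableSet
      apply Continuous.matrix_det
      refine continuous_matrix fun i j => ?_
      exact (MvPolynomial.continuous_eval (b j)).comp (continuous_apply i)
    · filter_upwards [ih (fun j => b j.succ) (hb.comp _ (Fin.succ_injective n))] with s hs
      set c : Fin (n+1) → ℝ := fun j => (-1) ^ (j : ℕ) *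
        Matrix.det (Matrix.of fun i k : Fin n => MvPolynomial.eval (s i) (b (j.succAbove k))) with hc
      have hq : ∑ j, c j • b j ≠ 0 := by
        intro h0
        have := Fintype.linearIndependent_iff.1 hb c h0 0
        apply hs
        simpa [hc] using this
      have := hac.ae_le (aux_mvpoly_ae d _ hq)
      filter_upwards [this] with y hy
      rw [Matrix.det_succ_row_zero]
      convert hy using 1
      simp only [map_sum, MvPolynomial.smul_eval, hc]
      refine Finset.sum_congr rfl fun j _ => ?_
      simp only [Matrix.of_apply, Fin.cons_zero, Matrix.submatrix]
      simp only [Fin.cons_succ]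
      ring

lemma aux_restrict {α : Type} [MeasurableSpace α] (ν : Measure α) [IsProbabilityMeasure ν]
    {n N : ℕ} (h : n ≤ N) :
    MeasurePreserving (fun (X : Fin N → α) (j : Fin n) => X (Fin.castLE h j))
      (Measure.pi fun _ => ν) (Measure.pi fun _ => ν) := by
  refine ⟨by fun_prop, ?_⟩
  symm
  apply Measure.pi_eq
  intro s hs
  rw [Measure.map_apply (by fun_prop) (MeasurableSet.univ_pi hs)]
  have : (fun (X : Fin N → α) (j : Fin n) => X (Fin.castLE h j)) ⁻¹' (Set.univ.pi s)
      = Set.univ.pi (fun i : Fin N => if hi : (i : ℕ) < n then s ⟨i, hi⟩ else Set.univ) := by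
    ext X
    simp only [Set.mem_preimage, Set.mem_pi, Set.mem_univ, true_imp_iff]
    constructor
    · intro hX i
      split_ifs with hi
      · exact hX ⟨i, hi⟩
      · trivial
    · intro hX j
      have := hX (Fin.castLE h j)
      simpa using this
  rw [this, Measure.pi_pi]
  obtain ⟨r, rfl⟩ := Nat.exists_eq_add_of_le h
  rw [Fin.prod_univ_add]
  simp

lemma aux_card (d D : ℕ) : ((Finset.range (D+1)).biUnion fun t =>
    Finset.finsuppAntidiag (Finset.univ : Finset (Fin d)) t).card
      ≤ ∑ t ∈ Finset.range (D + 1), (d + t - 1).choose t := by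
  refine Finset.card_biUnion_le.trans (le_of_eq ?_)
  refine Finset.sum_congr rfl fun t _ => ?_
  rw [Finset.card_finsuppAntidiag_nat_eq_choose]
  simp

lemma aux_key {d : ℕ} (ν : Measure (Fin d → ℝ)) [IsProbabilityMeasure ν]
    (hac : ν ≪ (volume : Measure (Fin d → ℝ))) (N D : ℕ)
    (hN : N ≥ ∑ t ∈ Finset.range (D + 1), (d + t - 1).choose t) :
    ∀ᵐ X ∂(Measure.pi fun _ : Fin N => ν), ∀ p : MvPolynomial (Fin d) ℝ,
      p.totalDegree ≤ D → (∀ i, MvPolynomial.eval (X i) p = 0) → p = 0 := by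
  set S := (Finset.range (D+1)).biUnion fun t =>
    Finset.finsuppAntidiag (Finset.univ : Finset (Fin d)) t with hS
  have hcard : S.card ≤ N := (aux_card d D).trans hN
  let e := S.equivFin.symm
  let b : Fin S.card → MvPolynomial (Fin d) ℝ := fun j => MvPolynomial.monomial (e j).1 1
  have hb : LinearIndependent ℝ b := by
    have := (MvPolynomial.basisMonomials (Fin d) ℝ).linearIndependent.comp (fun j => (e j).1)
      (Subtype.val_injective.comp e.injective)
    simpa [b, Function.comp_def] using! this
  have h1 := (aux_restrict ν hcard).quasiMeasurePreserving.ae (aux_det ν hac _ b hb)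
  filter_upwards [h1] with X hX p hp hz
  have hsupp : p.support ⊆ S := by
    intro α hα
    simp only [hS, Finset.mem_biUnion, Finset.mem_range, Finset.mem_finsuppAntidiag]
    refine ⟨∑ i, α i, ?_, rfl, Finset.subset_univ _⟩
    have := MvPolynomial.le_totalDegree hα
    rw [Finsupp.sum_fintype _ _ (fun _ => rfl)] at this
    omega
  have hexp : p = ∑ j, p.coeff (e j).1 • b j := by
    rw [e.sum_comp (fun a : S => p.coeff a.1 • MvPolynomial.monomial a.1 (1:ℝ))]
    rw [Finset.sum_coe_sort S (fun a => p.coeff a • MvPolynomial.monomial a (1:ℝ))]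
    conv_lhs => rw [p.as_sum]
    rw [Finset.sum_subset hsupp]
    · simp [MvPolynomial.smul_monomial]
    · intro α _ hα
      simp [MvPolynomial.notMem_support_iff.1 hα]
  have hv : (fun j => p.coeff (e j).1) = 0 := by
    apply Matrix.eq_zero_of_mulVec_eq_zero hX
    ext i
    have := hz (Fin.castLE hcard i)
    rw [hexp] at this
    simp only [map_sum, MvPolynomial.smul_eval] at this
    simpa [Matrix.mulVec, dotProduct, mul_comm] using this
  rw [hexp]
  exact Finset.sum_eq_zero fun j _ => by rw [show p.coeff (e j).1 = 0 from congrFun hv j, zero_smul]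

lemma aux_layer {d m n : ℕ} (Q : Polynomial ℝ) (W : Matrix (Fin m) (Fin n) ℝ) (D : ℕ)
    (p : Fin n → MvPolynomial (Fin d) ℝ) (hp : ∀ i, (p i).totalDegree ≤ D) :
    ∃ q : Fin m → MvPolynomial (Fin d) ℝ, (∀ j, (q j).totalDegree ≤ Q.natDegree * D) ∧
      ∀ x, applyLayer Q.eval W (fun i => MvPolynomial.eval x (p i)) =
        fun j => MvPolynomial.eval x (q j) := by
  refine ⟨fun j => Polynomial.aeval (∑ i, W j i • p i) Q, fun j => ?_, fun x => ?_⟩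
  · have h : (∑ i, W j i • p i).totalDegree ≤ D :=
      MvPolynomial.totalDegree_finsetSum_le fun i _ =>
        (MvPolynomial.totalDegree_smul_le _ _).trans (hp i)
    beta_reduce
    rw [Polynomial.aeval_eq_sum_range]
    refine MvPolynomial.totalDegree_finsetSum_le fun i hi => ?_
    refine (MvPolynomial.totalDegree_smul_le _ _).trans ?_
    refine (MvPolynomial.totalDegree_pow _ _).trans ?_
    exact Nat.mul_le_mul (Nat.lt_succ_iff.1 (Finset.mem_range.1 hi)) h
  · funext j
    simp only [applyLayer]
    rw [Polynomial.aeval_def, Polynomial.hom_eval₂]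
    have : (MvPolynomial.eval x).comp (algebraMap ℝ (MvPolynomial (Fin d) ℝ)) = RingHom.id ℝ := by
      ext y
      simp [MvPolynomial.algebraMap_eq]
    rw [this]
    simp [Polynomial.eval₂_id, MvPolynomial.smul_eval]

lemma aux_iter {d m : ℕ} (Q : Polynomial ℝ) (n : ℕ) (Ws : Fin n → Matrix (Fin m) (Fin m) ℝ) (D : ℕ)
    (p : Fin m → MvPolynomial (Fin d) ℝ) (hp : ∀ i, (p i).totalDegree ≤ D) :
    ∃ q : Fin m → MvPolynomial (Fin d) ℝ, (∀ j, (q j).totalDegree ≤ Q.natDegree ^ n * D) ∧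
      ∀ x, iterLayers Q.eval n Ws (fun i => MvPolynomial.eval x (p i)) =
        fun j => MvPolynomial.eval x (q j) := by
  induction n with
  | zero => exact ⟨p, by simpa using hp, fun x => rfl⟩
  | succ n ih =>
    obtain ⟨q, hq, hq'⟩ := ih (fun i => Ws i.castSucc)
    obtain ⟨r, hr, hr'⟩ := aux_layer Q (Ws (Fin.last n)) _ q hq
    refine ⟨r, fun j => (hr j).trans (le_of_eq (by ring)), fun x => ?_⟩
    rw [iterLayers, hq', hr']

lemma aux_nn {d m n : ℕ} (Q : Polynomial ℝ) (a : Fin m → ℝ)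
    (W1 : Matrix (Fin m) (Fin d) ℝ) (Ws : Fin n → Matrix (Fin m) (Fin m) ℝ) :
    ∃ p : MvPolynomial (Fin d) ℝ, p.totalDegree ≤ Q.natDegree ^ (n+1) ∧
      ∀ x, nnFun Q.eval a W1 Ws x = MvPolynomial.eval x p := by
  obtain ⟨q, hq, hq'⟩ := aux_layer Q W1 1 (fun i => MvPolynomial.X (R := ℝ) i)
    (fun i => (MvPolynomial.totalDegree_X i).le)
  obtain ⟨r, hr, hr'⟩ := aux_iter Q n Ws _ q hq
  refine ⟨∑ j, a j • r j, ?_, fun x => ?_⟩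
  · refine MvPolynomial.totalDegree_finsetSum_le fun i _ =>
        (MvPolynomial.totalDegree_smul_le _ _).trans ((hr i).trans (le_of_eq (by ring)))
  · have := hq' x
    simp only [MvPolynomial.eval_X] at this
    simp only [nnFun, this, hr', map_sum, MvPolynomial.smul_eval]

/-- Polynomial activation, jointly continuous inputs, teacher/student:
provided `N ≥ Σ_{t=0}^{k^L} C(d+t−1, t)`, with probability one any interpolating student
network of width `m̂ ≥ m*` agrees with the teacher everywhere. -/
theorem overparametrized_polynomial_recovery_continuous
    (d m L N k : ℕ) (hL : 1 ≤ L)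
    (Q : Polynomial ℝ) (hQ : Q.natDegree = k)
    (ν : Measure (Fin d → ℝ)) (hν : IsProbabilityMeasure ν)
    (hac : ν ≪ (volume : Measure (Fin d → ℝ)))
    (a : Fin m → ℝ) (W1 : Matrix (Fin m) (Fin d) ℝ)
    (Ws : Fin (L - 1) → Matrix (Fin m) (Fin m) ℝ)
    (hN : N ≥ ∑ t ∈ Finset.range (k ^ L + 1), (d + t - 1).choose t) :
    (Measure.pi fun _ : Fin N => ν)
      {X | ∀ (mh : ℕ), m ≤ mh →
        ∀ (ah : Fin mh → ℝ) (V1 : Matrix (Fin mh) (Fin d) ℝ)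
          (Vs : Fin (L - 1) → Matrix (Fin mh) (Fin mh) ℝ),
        (∀ i : Fin N, nnFun Q.eval ah V1 Vs (X i) = nnFun Q.eval a W1 Ws (X i)) →
        ∀ x : Fin d → ℝ, nnFun Q.eval a W1 Ws x = nnFun Q.eval ah V1 Vs x} = 1 := by
  have hae := aux_key ν hac N (k ^ L) hN
  rw [measure_congr (Filter.eventuallyEq_univ.2 ?_), measure_univ]
  refine Filter.mem_of_superset hae ?_
  intro X hX mh _ ah V1 Vs hi x
  obtain ⟨p, hp, hp'⟩ := aux_nn Q a W1 Ws
  obtain ⟨q, hq, hq'⟩ := aux_nn Q ah V1 Vs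
  rw [hQ, Nat.sub_add_cancel hL] at hp hq
  have h0 := hX (p - q) ((MvPolynomial.totalDegree_sub _ _).trans (max_le hp hq)) (fun i => by
    have := hi i
    rw [hp', hq'] at this
    rw [map_sub, this, sub_self])
  rw [hp', hq', sub_eq_zero.1 h0]

end
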